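/- arXiv:1507.02409 — 2 statements merged into one kernel-verified Lean document; each statement's English description precedes it below -/
import Mathlib

section
/- Let d ≥ 1 and let Φ be a complex-valued Schwartz function on ℝ^d with ∫_{ℝ^d} Φ = 0 which is nondegenerate, i.e. for every ξ ∈ ℝ^d \ {0} there exists ε > 0 with Φ̂(εξ) ≠ 0. Then there exists a complex-valued Schwartz function Ψ on ℝ^d with ∫_{ℝ^d} Ψ = 0 such that for every ξ ∈ ℝ^d \ {0} the integral ∫_0^∞ Φ̂(εξ) · conj(Ψ̂(εξ)) dε/ε converges absolutely and equals 1. -/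
open MeasureTheory Real FourierTransform Complex

noncomputable section

/-- `ℝ^d`. -/
abbrev Ed (d : ℕ) := EuclideanSpace ℝ (Fin d)

/-!
Any open set `U` that misses the origin and meets every open ray carries a smooth compactly
supported function `χ` with `∫₀^∞ χ(tξ) dt/t = 1` for all `ξ ≠ 0`: take a smooth `η ≥ 0`, compactly
supported in `U` and not identically zero on any ray (compactness of the sphere), and divide it by
its ray integrals, which depend on the ray only. Applied to the set `U` of points other than the
origin where `Φ̂` does not vanish, this makes `Ψ̂ = χ / conj Φ̂` a Schwartz function that vanishes
near the origin, and `Φ̂ · conj Ψ̂ = χ`. The substitution `t = exp u` turns ray integrals into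
integrals of compactly supported functions over the line.
-/

open Set
open scoped ContDiff SchwartzMap ComplexConjugate Topology

section ChangeOfVariables

variable {F : Type*} [NormedAddCommGroup F] [NormedSpace ℝ F]

theorem integrableOn_Ioi_inv_smul_iff (g : ℝ → F) :
    IntegrableOn (fun t ↦ t⁻¹ • g t) (Ioi 0) ↔ Integrable fun u ↦ g (Real.exp u) := by
  have := integrableOn_image_iff_integrableOn_abs_deriv_smul MeasurableSet.univ
    (fun u _ ↦ (Real.hasDerivAt_exp u).hasDerivWithinAt) Real.exp_injective.injOn
    (fun t ↦ t⁻¹ • g t)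
  simpa [Real.range_exp] using this

theorem integral_Ioi_inv_smul (g : ℝ → F) :
    ∫ t in Ioi (0 : ℝ), t⁻¹ • g t = ∫ u, g (Real.exp u) := by
  have := integral_image_eq_integral_abs_deriv_smul MeasurableSet.univ
    (fun u _ ↦ (Real.hasDerivAt_exp u).hasDerivWithinAt) Real.exp_injective.injOn
    (fun t ↦ t⁻¹ • g t)
  simpa [Real.range_exp] using this

end ChangeOfVariables

section RayIntegral

variable {E F : Type*} [NormedAddCommGroup E] [NormedSpace ℝ E]
  [NormedAddCommGroup F] {f : E → F} {ξ : E}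

theorem exists_isCompact_forall_exp_smul_mem {K L : Set E} (hK : IsCompact K) (hK0 : 0 ∉ K)
    (hL : IsCompact L) (hL0 : 0 ∉ L) :
    ∃ k : Set ℝ, IsCompact k ∧ ∀ ξ ∈ L, ∀ u, Real.exp u • ξ ∈ K → u ∈ k := by
  have hcont : ContinuousOn (fun p : E × E ↦ Real.log ‖p.1‖ - Real.log ‖p.2‖) (K ×ˢ L) :=
    (continuous_fst.norm.continuousOn.log fun p hp ↦
        norm_ne_zero_iff.2 (ne_of_mem_of_not_mem hp.1 hK0)).sub
      (continuous_snd.norm.continuousOn.log fun p hp ↦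
        norm_ne_zero_iff.2 (ne_of_mem_of_not_mem hp.2 hL0))
  refine ⟨_, (hK.prod hL).image_of_continuousOn hcont, fun ξ hξ u hu ↦
    ⟨(Real.exp u • ξ, ξ), ⟨hu, hξ⟩, ?_⟩⟩
  have hξ0 : ‖ξ‖ ≠ 0 := norm_ne_zero_iff.2 (ne_of_mem_of_not_mem hξ hL0)
  simp [norm_smul, Real.log_mul (Real.exp_ne_zero u) hξ0]

theorem hasCompactSupport_comp_exp_smul (hf : HasCompactSupport f) (hf0 : 0 ∉ tsupport f)
    (hξ : ξ ≠ 0) : HasCompactSupport fun u : ℝ ↦ f (Real.exp u • ξ) := by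
  obtain ⟨k, hk, hmem⟩ := exists_isCompact_forall_exp_smul_mem hf hf0
    (isCompact_singleton (x := ξ)) (by simpa using hξ.symm)
  exact .intro hk fun u hu ↦ image_eq_zero_of_notMem_tsupport fun h ↦ hu (hmem ξ rfl u h)

theorem integrable_comp_exp_smul (hfc : Continuous f) (hf : HasCompactSupport f)
    (hf0 : 0 ∉ tsupport f) (hξ : ξ ≠ 0) : Integrable fun u : ℝ ↦ f (Real.exp u • ξ) :=
  (hfc.comp (by fun_prop)).integrable_of_hasCompactSupport
    (hasCompactSupport_comp_exp_smul hf hf0 hξ)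

variable [NormedSpace ℝ F]

/-- The integral `∫₀^∞ f(tξ) dt/t` of `f` along the open ray through `ξ`, written in the
logarithmic variable `u = log t`. -/
def rayIntegral (f : E → F) (ξ : E) : F :=
  ∫ u : ℝ, f (Real.exp u • ξ)

theorem rayIntegral_smul (f : E → F) (ξ : E) {t : ℝ} (ht : 0 < t) :
    rayIntegral f (t • ξ) = rayIntegral f ξ := by
  calc rayIntegral f (t • ξ)
      = ∫ u : ℝ, f (Real.exp (u + Real.log t) • ξ) := by
        simp only [rayIntegral, smul_smul, Real.exp_add, Real.exp_log ht]
    _ = rayIntegral f ξ :=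
        integral_add_right_eq_self (fun u ↦ f (Real.exp u • ξ)) (Real.log t)

theorem rayIntegral_pos {η : E → ℝ} (hηc : Continuous η) (hη : HasCompactSupport η)
    (hη0 : 0 ∉ tsupport η) (hη_nonneg : 0 ≤ η) (hξ : ξ ≠ 0) {t : ℝ} (ht : 0 < t)
    (htξ : η (t • ξ) ≠ 0) : 0 < rayIntegral η ξ :=
  (hηc.comp (by fun_prop : Continuous fun u : ℝ ↦ Real.exp u • ξ))
    |>.integral_pos_of_hasCompactSupport_nonneg_nonzero
      (hasCompactSupport_comp_exp_smul hη hη0 hξ) (fun _ ↦ hη_nonneg _)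
      (x := Real.log t) (by simpa [Real.exp_log ht] using htξ)

theorem contDiffAt_rayIntegral [LocallyCompactSpace E] {n : ℕ∞} (hfn : ContDiff ℝ n f)
    (hf : HasCompactSupport f) (hf0 : 0 ∉ tsupport f) (hξ : ξ ≠ 0) :
    ContDiffAt ℝ n (rayIntegral f) ξ := by
  obtain ⟨L, hL, hξL, hL0⟩ := exists_compact_subset isOpen_compl_singleton hξ
  obtain ⟨k, hk, hmem⟩ := exists_isCompact_forall_exp_smul_mem hf hf0 hL fun h ↦ hL0 h rfl
  -- The ray integral is the convolution with the constant `1`, evaluated at `0`.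
  have hconv : ContDiffOn ℝ n (fun ζ ↦ convolution (fun _ : ℝ ↦ (1 : ℝ))
      (fun u ↦ f (Real.exp (-u) • ζ)) (ContinuousLinearMap.lsmul ℝ ℝ) volume 0) (interior L) := by
    refine contDiffOn_convolution_right_with_param_comp (k := -k)
      (g := fun (ζ : E) (u : ℝ) ↦ f (Real.exp (-u) • ζ)) _ contDiffOn_const isOpen_interior
      hk.neg (fun ζ u hζ hu ↦ ?_) (locallyIntegrable_const 1) ?_
    · exact image_eq_zero_of_notMem_tsupport fun h ↦ hu (hmem ζ (interior_subset hζ) (-u) h)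
    · exact (hfn.comp (by fun_prop :
        ContDiff ℝ n fun p : E × ℝ ↦ Real.exp (-p.2) • p.1)).contDiffOn
  simpa [convolution_def, ← rayIntegral.eq_def] using
    hconv.contDiffAt (isOpen_interior.mem_nhds hξL)

theorem ofReal_div_eq_inv_smul (x t : ℝ) : (x / t : ℂ) = t⁻¹ • (x : ℂ) := by
  rw [Complex.real_smul, Complex.ofReal_inv, div_eq_inv_mul]

theorem integrableOn_Ioi_ofReal_comp_smul_div {χ : E → ℝ} (hχc : Continuous χ)
    (hχ : HasCompactSupport χ) (hχ0 : 0 ∉ tsupport χ) (hξ : ξ ≠ 0) :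
    IntegrableOn (fun t : ℝ ↦ (χ (t • ξ) : ℂ) / t) (Ioi 0) := by
  simp only [ofReal_div_eq_inv_smul]
  exact (integrableOn_Ioi_inv_smul_iff fun t ↦ (χ (t • ξ) : ℂ)).2
    (integrable_comp_exp_smul hχc hχ hχ0 hξ).ofReal

theorem integral_Ioi_ofReal_comp_smul_div (χ : E → ℝ) (ξ : E) :
    ∫ t in Ioi (0 : ℝ), (χ (t • ξ) : ℂ) / t = ((rayIntegral χ ξ : ℝ) : ℂ) := by
  calc ∫ t in Ioi (0 : ℝ), (χ (t • ξ) : ℂ) / t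
      = ∫ t in Ioi (0 : ℝ), t⁻¹ • (χ (t • ξ) : ℂ) := by simp only [ofReal_div_eq_inv_smul]
    _ = ∫ u : ℝ, (χ (Real.exp u • ξ) : ℂ) := integral_Ioi_inv_smul _
    _ = ((rayIntegral χ ξ : ℝ) : ℂ) := integral_ofReal

end RayIntegral

section Partition

variable {E : Type*} [NormedAddCommGroup E] [NormedSpace ℝ E] [FiniteDimensional ℝ E] {U : Set E}

theorem exists_isCompact_subset_forall_smul_mem_interior (hU : IsOpen U)
    (hray : ∀ ξ : E, ξ ≠ 0 → ∃ t : ℝ, 0 < t ∧ t • ξ ∈ U) :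
    ∃ K ⊆ U, IsCompact K ∧ ∀ ξ : E, ξ ≠ 0 → ∃ t : ℝ, 0 < t ∧ t • ξ ∈ interior K := by
  have := FiniteDimensional.proper_real E
  suffices h : ∃ K ⊆ U, IsCompact K ∧
      ∀ ζ ∈ Metric.sphere (0 : E) 1, ∃ t : ℝ, 0 < t ∧ t • ζ ∈ interior K by
    obtain ⟨K, hKU, hK, hmem⟩ := h
    refine ⟨K, hKU, hK, fun ξ hξ ↦ ?_⟩
    obtain ⟨t, ht, htK⟩ := hmem (‖ξ‖⁻¹ • ξ) (by simp [norm_smul, hξ])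
    exact ⟨t * ‖ξ‖⁻¹, by positivity, by rwa [mul_smul]⟩
  refine (isCompact_sphere (0 : E) 1).induction_on ?_ ?_ ?_ ?_
  · exact ⟨∅, empty_subset U, isCompact_empty, by simp⟩
  · rintro S T hST ⟨K, hKU, hK, hmem⟩
    exact ⟨K, hKU, hK, fun ζ hζ ↦ hmem ζ (hST hζ)⟩
  · rintro S T ⟨K, hKU, hK, hS⟩ ⟨L, hLU, hL, hT⟩
    refine ⟨K ∪ L, union_subset hKU hLU, hK.union hL, ?_⟩
    rintro ζ (hζ | hζ)
    · obtain ⟨t, ht, htK⟩ := hS ζ hζ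
      exact ⟨t, ht, interior_mono subset_union_left htK⟩
    · obtain ⟨t, ht, htL⟩ := hT ζ hζ
      exact ⟨t, ht, interior_mono subset_union_right htL⟩
  · intro ζ hζ
    obtain ⟨t, ht, htU⟩ := hray ζ (ne_zero_of_mem_unit_sphere ⟨ζ, hζ⟩)
    obtain ⟨K, hK, htK, hKU⟩ := exists_compact_subset hU htU
    exact ⟨(t • ·) ⁻¹' interior K,
      mem_nhdsWithin_of_mem_nhds
        ((isOpen_interior.preimage (continuous_const_smul t)).mem_nhds htK),
      K, hKU, hK, fun _ htζ ↦ ⟨t, ht, htζ⟩⟩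

theorem exists_contDiff_nonneg_forall_smul_ne_zero (hU : IsOpen U)
    (hray : ∀ ξ : E, ξ ≠ 0 → ∃ t : ℝ, 0 < t ∧ t • ξ ∈ U) :
    ∃ η : E → ℝ, ContDiff ℝ ∞ η ∧ HasCompactSupport η ∧ tsupport η ⊆ U ∧ 0 ≤ η ∧
      ∀ ξ : E, ξ ≠ 0 → ∃ t : ℝ, 0 < t ∧ η (t • ξ) ≠ 0 := by
  obtain ⟨K, hKU, hK, hmem⟩ := exists_isCompact_subset_forall_smul_mem_interior hU hray
  obtain ⟨η, hη_supp, hη_smooth, hη_range⟩ :=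
    (isOpen_interior (s := K)).exists_contDiff_support_eq (n := ⊤)
  have hηK : tsupport η ⊆ K :=
    closure_minimal (hη_supp.trans_subset interior_subset) hK.isClosed
  refine ⟨η, hη_smooth, hK.of_isClosed_subset (isClosed_tsupport η) hηK, hηK.trans hKU,
    fun x ↦ (hη_range ⟨x, rfl⟩).1, fun ξ hξ ↦ ?_⟩
  obtain ⟨t, ht, htK⟩ := hmem ξ hξ
  exact ⟨t, ht, hη_supp.ge htK⟩

theorem exists_contDiff_rayIntegral_eq_one (hU : IsOpen U) (hU0 : 0 ∉ U)
    (hray : ∀ ξ : E, ξ ≠ 0 → ∃ t : ℝ, 0 < t ∧ t • ξ ∈ U) :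
    ∃ χ : E → ℝ, ContDiff ℝ ∞ χ ∧ HasCompactSupport χ ∧ tsupport χ ⊆ U ∧
      ∀ ξ : E, ξ ≠ 0 → rayIntegral χ ξ = 1 := by
  obtain ⟨η, hη_smooth, hη, hηU, hη_nonneg, hη_ray⟩ :=
    exists_contDiff_nonneg_forall_smul_ne_zero hU hray
  have hη0 : 0 ∉ tsupport η := fun h ↦ hU0 (hηU h)
  have hpos (ξ : E) (hξ : ξ ≠ 0) : 0 < rayIntegral η ξ :=
    have ⟨_, ht, htξ⟩ := hη_ray ξ hξ
    rayIntegral_pos hη_smooth.continuous hη hη0 hη_nonneg hξ ht htξ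
  have htsupport : tsupport (fun ξ ↦ η ξ * (rayIntegral η ξ)⁻¹) ⊆ tsupport η :=
    tsupport_mul_subset_left
  refine ⟨fun ξ ↦ η ξ * (rayIntegral η ξ)⁻¹, ?_, hη.mul_right, htsupport.trans hηU,
    fun ξ hξ ↦ ?_⟩
  · refine (contMDiff_of_tsupport fun ξ hξ ↦ ContDiffAt.contMDiffAt ?_).contDiff
    have hξ0 : ξ ≠ 0 := ne_of_mem_of_not_mem (htsupport hξ) hη0
    exact hη_smooth.contDiffAt.mul
      ((contDiffAt_rayIntegral hη_smooth hη hη0 hξ0).inv (hpos ξ hξ0).ne')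
  · calc rayIntegral (fun ζ ↦ η ζ * (rayIntegral η ζ)⁻¹) ξ
        = ∫ u : ℝ, η (Real.exp u • ξ) * (rayIntegral η ξ)⁻¹ := by
          simp only [rayIntegral.eq_def (fun _ ↦ _ * _), rayIntegral_smul η ξ (Real.exp_pos _)]
      _ = rayIntegral η ξ * (rayIntegral η ξ)⁻¹ := integral_mul_const _ _
      _ = 1 := mul_inv_cancel₀ (hpos ξ hξ).ne'

end Partition

theorem exists_schwartzMap_mul_conj_eq {E : Type*} [NormedAddCommGroup E] [NormedSpace ℝ E]
    {F : E → ℂ} (hF : ContDiff ℝ ∞ F) {χ : E → ℝ} (hχ_smooth : ContDiff ℝ ∞ χ)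
    (hχ : HasCompactSupport χ) (hFχ : ∀ x ∈ tsupport χ, F x ≠ 0) :
    ∃ Q : 𝓢(E, ℂ), (∀ x, χ x = 0 → Q x = 0) ∧ ∀ x, F x * conj (Q x) = χ x := by
  have hsupp : HasCompactSupport fun x ↦ χ x • (conj (F x))⁻¹ := hχ.smul_right
  have hsmooth : ContDiff ℝ ∞ fun x ↦ χ x • (conj (F x))⁻¹ := by
    refine (contMDiff_of_tsupport fun x hx ↦ ContDiffAt.contMDiffAt ?_).contDiff
    have hFx : conj (F x) ≠ 0 :=
      (map_ne_zero _).2 (hFχ x (tsupport_smul_subset_left χ _ hx))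
    exact hχ_smooth.contDiffAt.smul
      ((conjCLE.contDiff.comp hF).contDiffAt.inv hFx)
  refine ⟨hsupp.toSchwartzMap hsmooth, fun x hx ↦ by simp [hx], fun x ↦ ?_⟩
  by_cases hx : x ∈ tsupport χ
  · calc F x * conj (χ x • (conj (F x))⁻¹) = χ x * (F x * (F x)⁻¹) := by
          rw [Complex.real_smul, map_mul, conj_ofReal, map_inv₀, conj_conj, mul_left_comm]
      _ = χ x := by rw [mul_inv_cancel₀ (hFχ x hx), mul_one]
  · simp [image_eq_zero_of_notMem_tsupport hx]

section Fourier

variable {V : Type*} [NormedAddCommGroup V] [InnerProductSpace ℝ V] [FiniteDimensional ℝ V]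
  [MeasurableSpace V] [BorelSpace V]
  {W : Type*} [NormedAddCommGroup W] [NormedSpace ℂ W] [CompleteSpace W]

theorem fourier_coe_fourierInv (Q : 𝓢(V, W)) : 𝓕 (fun x ↦ (𝓕⁻ Q : 𝓢(V, W)) x) = Q := by
  rw [← SchwartzMap.fourier_coe (𝓕⁻ Q), FourierTransform.fourier_fourierInv_eq]

theorem integral_fourierInv (Q : 𝓢(V, W)) : ∫ x, (𝓕⁻ Q : 𝓢(V, W)) x = Q 0 := by
  rw [← fourier_coe_fourierInv Q, Real.fourier_eq]
  simp

theorem exists_companion_reproducing_general (Φ : 𝓢(V, ℂ))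
    (hΦnd : ∀ ξ : V, ξ ≠ 0 → ∃ ε : ℝ, 0 < ε ∧ 𝓕 (fun s ↦ Φ s) (ε • ξ) ≠ 0) :
    ∃ Ψ : 𝓢(V, ℂ), (∫ s, Ψ s = 0) ∧
      ∀ ξ : V, ξ ≠ 0 →
        IntegrableOn (fun ε : ℝ ↦
          𝓕 (fun s ↦ Φ s) (ε • ξ) * conj (𝓕 (fun s ↦ Ψ s) (ε • ξ)) / (ε : ℂ)) (Ioi 0) ∧
        ∫ ε in Ioi (0 : ℝ),
          𝓕 (fun s ↦ Φ s) (ε • ξ) * conj (𝓕 (fun s ↦ Ψ s) (ε • ξ)) / (ε : ℂ) = 1 := by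
  have hΦ_smooth : ContDiff ℝ ∞ (𝓕 (fun s ↦ Φ s)) := (𝓕 Φ).smooth ⊤
  obtain ⟨χ, hχ_smooth, hχ, hχU, hχ_one⟩ :=
    exists_contDiff_rayIntegral_eq_one (U := {ξ | ξ ≠ 0 ∧ 𝓕 (fun s ↦ Φ s) ξ ≠ 0})
      (isOpen_ne.inter (isOpen_ne_fun hΦ_smooth.continuous continuous_const))
      (fun h ↦ h.1 rfl)
      fun ξ hξ ↦ (hΦnd ξ hξ).imp fun ε ⟨hε, h⟩ ↦ ⟨hε, smul_ne_zero hε.ne' hξ, h⟩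
  have hχ0 : 0 ∉ tsupport χ := fun h ↦ (hχU h).1 rfl
  obtain ⟨Q, hQ_zero, hQ⟩ :=
    exists_schwartzMap_mul_conj_eq hΦ_smooth hχ_smooth hχ fun ξ hξ ↦ (hχU hξ).2
  refine ⟨𝓕⁻ Q, ?_, fun ξ hξ ↦ ?_⟩
  · rw [integral_fourierInv, hQ_zero 0 (image_eq_zero_of_notMem_tsupport hχ0)]
  · simp only [fourier_coe_fourierInv, hQ]
    exact ⟨integrableOn_Ioi_ofReal_comp_smul_div hχ_smooth.continuous hχ hχ0 hξ,
      by rw [integral_Ioi_ofReal_comp_smul_div, hχ_one ξ hξ, Complex.ofReal_one]⟩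

end Fourier

/-- Existence of a companion function `Ψ` satisfying the reproducing
condition (1.4) for a nondegenerate Schwartz function `Φ` of vanishing mean. -/
theorem exists_companion_reproducing
    (d : ℕ) (hd : 1 ≤ d) (Φ : SchwartzMap (Ed d) ℂ)
    (hΦ0 : ∫ s, Φ s = 0)
    (hΦnd : ∀ ξ : Ed d, ξ ≠ 0 → ∃ ε : ℝ, 0 < ε ∧ 𝓕 (fun s => Φ s) (ε • ξ) ≠ 0) :
    ∃ Ψ : SchwartzMap (Ed d) ℂ, (∫ s, Ψ s = 0) ∧
      ∀ ξ : Ed d, ξ ≠ 0 →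
        IntegrableOn (fun ε : ℝ =>
          𝓕 (fun s => Φ s) (ε • ξ) * (starRingEnd ℂ) (𝓕 (fun s => Ψ s) (ε • ξ)) / (ε : ℂ))
          (Set.Ioi (0 : ℝ)) volume ∧
        ∫ ε in Set.Ioi (0 : ℝ),
          𝓕 (fun s => Φ s) (ε • ξ) * (starRingEnd ℂ) (𝓕 (fun s => Ψ s) (ε • ξ)) / (ε : ℂ) = 1 :=
  exists_companion_reproducing_general Φ hΦnd
end
end

section
/- Let d ≥ 1 and let Φ be a complex-valued Schwartz function on ℝ^d with ∫_{ℝ^d} Φ = 0 satisfying: for every ξ ∈ ℝ^d \ {0} there exist 0 < 2a ≤ b < ∞ such that Φ̂(εξ) ≠ 0 for all ε ∈ (a, b]. Then there exists a complex-valued Schwartz function Ψ on ℝ^d with ∫_{ℝ^d} Ψ = 0 such that for every ξ ∈ ℝ^d \ {0} the series Σ_{j∈ℤ} Φ̂(2^j ξ) · conj(Ψ̂(2^j ξ)) converges absolutely with sum 1. -/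
open MeasureTheory Real FourierTransform Complex

noncomputable section

/-!
The points where `𝓕 Φ ≠ 0` form an open set `U` whose dilates by the powers of `r > 1` cover
the complement of the origin. Such a `U` carries a dilation partition of unity: a smooth `θ` with
compact support in `U \ {0}` and `∑ j, θ (r ^ j • ξ) = 1` for `ξ ≠ 0`. By compactness of a closed
shell there is a nonnegative smooth `η`, compactly supported in `U \ {0}`, which does not vanish
identically on any orbit `{r ^ j • ξ}` with `ξ ≠ 0`, and `θ` is the quotient of `η` by the
dilation-invariant sum of its dilates. Since `𝓕 Φ` does not vanish on the support of `θ`, one may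
divide: `Ψ` is the Schwartz function with Fourier transform `conj (θ / 𝓕 Φ)`.
-/

open Filter Topology
open Bornology (cobounded)
open scoped ContDiff SchwartzMap

section Zpow

variable {K : Type*} [Field K] [LinearOrder K] [IsStrictOrderedRing K] [Archimedean K] {r : K}

lemma exists_zpow_mem_Ioc (hr : 1 < r) {a b : K} (ha : 0 < a) (hab : r * a ≤ b) :
    ∃ j : ℤ, r ^ j ∈ Set.Ioc a b := by
  have hr0 : 0 < r := one_pos.trans hr
  obtain ⟨j, hj_le, hj_lt⟩ := exists_mem_Ico_zpow (mul_pos hr0 ha) hr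
  rw [zpow_add_one₀ hr0.ne', mul_comm] at hj_lt
  exact ⟨j, lt_of_mul_lt_mul_right hj_lt hr0.le, hj_le.trans hab⟩

lemma tendsto_zpow_int_atTop (hr : 1 < r) : Tendsto (fun j : ℤ => r ^ j) atTop atTop :=
  tendsto_atTop_atTop_of_monotone (zpow_right_strictMono₀ hr).monotone fun b =>
    (pow_unbounded_of_one_lt b hr).imp' (fun n : ℕ => (n : ℤ)) fun n hn => by
      simpa only [zpow_natCast] using hn.le

lemma tendsto_zpow_int_atBot_nhds_zero [TopologicalSpace K] [OrderTopology K] (hr : 1 < r) :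
    Tendsto (fun j : ℤ => r ^ j) atBot (𝓝 0) := by
  have h := tendsto_inv_atTop_zero.comp
    ((tendsto_zpow_int_atTop hr).comp tendsto_neg_atBot_atTop)
  simpa only [Function.comp_def, zpow_neg, inv_inv] using h

end Zpow

section DilationSum

variable {E F : Type*} [NormedAddCommGroup E] [NormedSpace ℝ E] {r : ℝ} {x : E}

lemma tendsto_zpow_smul_atTop_cobounded (hr : 1 < r) (hx : x ≠ 0) :
    Tendsto (fun p : ℤ × E => r ^ p.1 • p.2) (atTop ×ˢ 𝓝 x) (cobounded E) := by
  rw [← tendsto_norm_atTop_iff_cobounded]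
  have hnorm : Tendsto (fun p : ℤ × E => r ^ p.1 * ‖p.2‖) (atTop ×ˢ 𝓝 x) atTop :=
    ((tendsto_zpow_int_atTop hr).comp tendsto_fst).atTop_mul_pos (norm_pos_iff.2 hx)
      tendsto_snd.norm
  refine hnorm.congr fun p => ?_
  rw [norm_smul, Real.norm_of_nonneg (zpow_pos (one_pos.trans hr) _).le]

lemma tendsto_zpow_smul_atBot_nhds_zero (hr : 1 < r) (x : E) :
    Tendsto (fun p : ℤ × E => r ^ p.1 • p.2) (atBot ×ˢ 𝓝 x) (𝓝 0) := by
  simpa only [Function.comp_def, zero_smul] using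
    ((tendsto_zpow_int_atBot_nhds_zero hr).comp tendsto_fst).smul
      (tendsto_snd (f := atBot) (g := 𝓝 x))

lemma eventually_zpow_smul_eq_zero [Zero F] {g : E → F} (hr : 1 < r)
    (hg : HasCompactSupport g) (hg0 : 0 ∉ tsupport g) (hx : x ≠ 0) :
    ∀ᶠ p : ℤ × E in cofinite ×ˢ 𝓝 x, g (r ^ p.1 • p.2) = 0 := by
  rw [Int.cofinite_eq, Filter.sup_prod, eventually_sup]
  have hg_far : g =ᶠ[cobounded E] 0 :=
    (hasCompactSupport_iff_eventuallyEq.1 hg).filter_mono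
      (coclosedCompact_eq_cocompact (X := E) ▸ Metric.cobounded_le_cocompact)
  exact ⟨(tendsto_zpow_smul_atBot_nhds_zero hr x).eventually
      (notMem_tsupport_iff_eventuallyEq.1 hg0),
    (tendsto_zpow_smul_atTop_cobounded hr hx).eventually hg_far⟩

/-- The sum of `g` along the orbit of `x` under dilation by the integer powers of `r`; its value is
the junk value of `tsum` where the series does not converge, in particular possibly at `x = 0`. -/
def dilationSum [AddCommMonoid F] [TopologicalSpace F] (r : ℝ) (g : E → F) (x : E) : F :=
  ∑' j : ℤ, g (r ^ j • x)

lemma hasSum_dilationSum [AddCommMonoid F] [TopologicalSpace F] {g : E → F} (hr : 1 < r)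
    (hg : HasCompactSupport g) (hg0 : 0 ∉ tsupport g) (hx : x ≠ 0) :
    HasSum (fun j : ℤ => g (r ^ j • x)) (dilationSum r g x) := by
  have h_finite : ∀ᶠ j : ℤ in cofinite, g (r ^ j • x) = 0 :=
    (eventually_zpow_smul_eq_zero hr hg hg0 hx).curry.mono fun _ h => h.self_of_nhds
  exact (summable_of_hasFiniteSupport (eventually_cofinite.1 h_finite)).hasSum

lemma dilationSum_zpow_smul [AddCommMonoid F] [TopologicalSpace F] (hr : r ≠ 0) (g : E → F)
    (k : ℤ) (x : E) : dilationSum r g (r ^ k • x) = dilationSum r g x := by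
  simpa only [dilationSum, Equiv.coe_addRight, smul_smul, zpow_add₀ hr] using
    (Equiv.addRight k).tsum_eq fun j : ℤ => g (r ^ j • x)

lemma dilationSum_pos {g : E → ℝ} (hr : 1 < r) (hg : HasCompactSupport g)
    (hg0 : 0 ∉ tsupport g) (hg_nonneg : 0 ≤ g) (hx : x ≠ 0) (hgx : ∃ j : ℤ, g (r ^ j • x) ≠ 0) :
    0 < dilationSum r g x :=
  let ⟨j, hj⟩ := hgx
  (hasSum_dilationSum hr hg hg0 hx).summable.tsum_pos (fun _ => hg_nonneg _) j
    ((hg_nonneg _).lt_of_ne' hj)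

lemma contDiffAt_dilationSum [NormedAddCommGroup F] [NormedSpace ℝ F] {g : E → F}
    {n : WithTop ℕ∞} (hr : 1 < r) (hg_smooth : ContDiff ℝ n g) (hg : HasCompactSupport g)
    (hg0 : 0 ∉ tsupport g) (hx : x ≠ 0) : ContDiffAt ℝ n (dilationSum r g) x := by
  obtain ⟨vanishes, h_cofinite, near, h_near, h_zero⟩ :=
    eventually_prod_iff.1 (eventually_zpow_smul_eq_zero hr hg hg0 hx)
  let scales : Finset ℤ := (eventually_cofinite.1 h_cofinite).toFinset
  have h_eq : dilationSum r g =ᶠ[𝓝 x] fun y => ∑ j ∈ scales, g (r ^ j • y) := by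
    filter_upwards [h_near] with y hy
    exact tsum_eq_sum fun j hj => h_zero (by simpa [scales] using hj) hy
  have h_sum : ContDiff ℝ n fun y => ∑ j ∈ scales, g (r ^ j • y) :=
    ContDiff.sum fun j _ => hg_smooth.comp (contDiff_const_smul _)
  exact h_sum.contDiffAt.congr_of_eventuallyEq h_eq

end DilationSum

section PartitionOfUnity

variable {E F : Type*} [NormedAddCommGroup E] [NormedSpace ℝ E] [NormedAddCommGroup F]
  [NormedSpace ℝ F]

lemma contDiff_smul_of_contDiffAt_tsupport {n : WithTop ℕ∞} {f : E → ℝ} {g : E → F}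
    (hf : ContDiff ℝ n f) (hg : ∀ x ∈ tsupport f, ContDiffAt ℝ n g x) :
    ContDiff ℝ n fun x => f x • g x := by
  rw [contDiff_iff_contDiffAt]
  intro x
  by_cases hx : x ∈ tsupport f
  · exact hf.contDiffAt.smul (hg x hx)
  · have h_zero : (fun y => f y • g y) =ᶠ[𝓝 x] fun _ => 0 :=
      (notMem_tsupport_iff_eventuallyEq.1 hx).mono fun y hy => by simp [hy]
    exact contDiffAt_const.congr_of_eventuallyEq h_zero

variable [FiniteDimensional ℝ E] {U : Set E} {r : ℝ}

lemma exists_contDiff_forall_mem_exists_apply_ne_zero {ι X : Type*} [TopologicalSpace X]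
    {T : ι → X → E} (hT : ∀ i, Continuous (T i)) (hU : IsOpen U) {K : Set X} (hK : IsCompact K)
    (hKU : ∀ x ∈ K, ∃ i, T i x ∈ U) :
    ∃ η : E → ℝ, ContDiff ℝ ∞ η ∧ HasCompactSupport η ∧ tsupport η ⊆ U ∧ 0 ≤ η ∧
      ∀ x ∈ K, ∃ i, η (T i x) ≠ 0 := by
  refine hK.induction_on (p := fun s => ∃ η : E → ℝ, ContDiff ℝ ∞ η ∧ HasCompactSupport η ∧
    tsupport η ⊆ U ∧ 0 ≤ η ∧ ∀ x ∈ s, ∃ i, η (T i x) ≠ 0) ?empty ?mono ?union ?nhds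
  case empty =>
    exact ⟨0, contDiff_const, .zero, by simp [tsupport], le_rfl, by simp⟩
  case mono =>
    rintro s t hst ⟨η, h_smooth, h_compact, hηU, h_nonneg, hη⟩
    exact ⟨η, h_smooth, h_compact, hηU, h_nonneg, fun x hx => hη x (hst hx)⟩
  case union =>
    rintro s t ⟨η, h_smooth, h_compact, hηU, h_nonneg, hη⟩
      ⟨η', h_smooth', h_compact', hηU', h_nonneg', hη'⟩
    refine ⟨η + η', h_smooth.add h_smooth', h_compact.add h_compact',
      (tsupport_add η η').trans (Set.union_subset hηU hηU'), add_nonneg h_nonneg h_nonneg', ?_⟩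
    rintro x (hx | hx)
    · exact (hη x hx).imp fun i hi =>
        (add_pos_of_pos_of_nonneg ((h_nonneg _).lt_of_ne' hi) (h_nonneg' _)).ne'
    · exact (hη' x hx).imp fun i hi =>
        (add_pos_of_nonneg_of_pos (h_nonneg _) ((h_nonneg' _).lt_of_ne' hi)).ne'
  case nhds =>
    intro x hx
    obtain ⟨i, hi⟩ := hKU x hx
    obtain ⟨η, hηU, h_compact, h_smooth, h_range, h_one⟩ :=
      exists_contDiff_tsupport_subset (n := ⊤) (hU.mem_nhds hi)
    refine ⟨{y | η (T i y) ≠ 0}, mem_nhdsWithin_of_mem_nhds ?_, η, h_smooth, h_compact, hηU,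
      fun y => (h_range ⟨y, rfl⟩).1, fun y hy => ⟨i, hy⟩⟩
    exact (h_smooth.continuous.comp (hT i)).continuousAt.eventually_ne (by simp [h_one])

lemma exists_contDiff_forall_exists_zpow_smul_ne_zero (hr : 1 < r) (hU : IsOpen U)
    (hUr : ∀ ξ ≠ 0, ∃ j : ℤ, r ^ j • ξ ∈ U) :
    ∃ η : E → ℝ, ContDiff ℝ ∞ η ∧ HasCompactSupport η ∧ tsupport η ⊆ U ∧ 0 ≤ η ∧
      ∀ ξ ≠ 0, ∃ j : ℤ, η (r ^ j • ξ) ≠ 0 := by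
  have hr_norm : 1 < ‖r‖ := hr.trans_le (le_abs_self r)
  let shell : Set E := Metric.closedBall 0 1 \ Metric.ball 0 (1 / ‖r‖)
  have h_shell : IsCompact shell := (isCompact_closedBall 0 1).diff Metric.isOpen_ball
  have h_shell_ne : ∀ x ∈ shell, x ≠ 0 := by
    rintro x hx rfl
    exact hx.2 (Metric.mem_ball_self (by positivity))
  obtain ⟨η, h_smooth, h_compact, hηU, h_nonneg, hη⟩ :=
    exists_contDiff_forall_mem_exists_apply_ne_zero (T := fun (j : ℤ) (x : E) => r ^ j • x)
      (fun j => continuous_const_smul _) hU h_shell fun x hx => hUr x (h_shell_ne x hx)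
  refine ⟨η, h_smooth, h_compact, hηU, h_nonneg, fun ξ hξ => ?_⟩
  obtain ⟨k, -, hk_lt, hk_ge, -⟩ := rescale_to_shell_zpow hr_norm one_pos hξ
  obtain ⟨j, hj⟩ := hη (r ^ k • ξ) ⟨by simpa using hk_lt.le, by simpa using hk_ge⟩
  refine ⟨j + k, ?_⟩
  rwa [zpow_add₀ (one_pos.trans hr).ne', mul_smul]

theorem exists_dilation_partition_of_unity (hr : 1 < r) (hU : IsOpen U)
    (hUr : ∀ ξ ≠ 0, ∃ j : ℤ, r ^ j • ξ ∈ U) :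
    ∃ θ : E → ℝ, ContDiff ℝ ∞ θ ∧ HasCompactSupport θ ∧ tsupport θ ⊆ U \ {0} ∧ 0 ≤ θ ∧
      ∀ ξ ≠ 0, HasSum (fun j : ℤ => θ (r ^ j • ξ)) 1 := by
  have hr0 : r ≠ 0 := (one_pos.trans hr).ne'
  obtain ⟨η, h_smooth, h_compact, hηU, h_nonneg, hη⟩ :=
    exists_contDiff_forall_exists_zpow_smul_ne_zero hr (hU.sdiff isClosed_singleton) fun ξ hξ =>
      (hUr ξ hξ).imp fun j hj => ⟨hj, smul_ne_zero (zpow_ne_zero j hr0) hξ⟩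
  have hη0 : 0 ∉ tsupport η := fun h => (hηU h).2 rfl
  have h_pos : ∀ ξ ≠ 0, 0 < dilationSum r η ξ := fun ξ hξ =>
    dilationSum_pos hr h_compact hη0 h_nonneg hξ (hη ξ hξ)
  refine ⟨fun x => η x • (dilationSum r η x)⁻¹, ?_, h_compact.smul_right,
    (tsupport_smul_subset_left η _).trans hηU, ?_, fun ξ hξ => ?_⟩
  · refine contDiff_smul_of_contDiffAt_tsupport h_smooth fun x hx => ?_
    have hx0 : x ≠ 0 := (hηU hx).2
    exact (contDiffAt_dilationSum hr h_smooth h_compact hη0 hx0).inv (h_pos x hx0).ne'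
  · exact fun x => mul_nonneg (h_nonneg x) (inv_nonneg.2 (tsum_nonneg fun _ => h_nonneg _))
  · have h_sum := (hasSum_dilationSum hr h_compact hη0 hξ).mul_right (dilationSum r η ξ)⁻¹
    simpa only [smul_eq_mul, dilationSum_zpow_smul hr0, mul_inv_cancel₀ (h_pos ξ hξ).ne']
      using h_sum

theorem exists_dilation_companion {𝕜 : Type*} [NormedField 𝕜] [NormedAlgebra ℝ 𝕜] {f : E → 𝕜}
    (hr : 1 < r) (hf : ContDiff ℝ ∞ f) (hfr : ∀ ξ ≠ 0, ∃ j : ℤ, f (r ^ j • ξ) ≠ 0) :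
    ∃ h : E → 𝕜, ContDiff ℝ ∞ h ∧ HasCompactSupport h ∧ 0 ∉ tsupport h ∧
      ∀ ξ ≠ 0, HasSum (fun j : ℤ => f (r ^ j • ξ) * h (r ^ j • ξ)) 1 := by
  obtain ⟨θ, h_smooth, h_compact, hθf, -, hθ⟩ := exists_dilation_partition_of_unity hr
    (isOpen_ne_fun hf.continuous continuous_const) hfr
  have h_mul : ∀ x, f x * (θ x • (f x)⁻¹) = θ x • (1 : 𝕜) := by
    intro x
    by_cases hx : x ∈ tsupport θ
    · rw [mul_smul_comm, mul_inv_cancel₀ (hθf hx).1]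
    · simp [image_eq_zero_of_notMem_tsupport hx]
  refine ⟨fun x => θ x • (f x)⁻¹, ?_, h_compact.smul_right,
    fun h => (hθf (tsupport_smul_subset_left θ _ h)).2 rfl, fun ξ hξ => ?_⟩
  · exact contDiff_smul_of_contDiffAt_tsupport h_smooth fun x hx =>
      hf.contDiffAt.inv (hθf hx).1
  · simpa only [h_mul, one_smul] using (hθ ξ hξ).smul_const (1 : 𝕜)

end PartitionOfUnity

section Fourier

variable {V : Type*} [NormedAddCommGroup V] [InnerProductSpace ℝ V] [MeasurableSpace V]
  [BorelSpace V] [FiniteDimensional ℝ V]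

lemma fourier_apply_zero {E : Type*} [NormedAddCommGroup E] [NormedSpace ℂ E] (f : V → E) :
    𝓕 f 0 = ∫ v, f v := by
  simp [Real.fourier_eq]

lemma exists_schwartzMap_fourier_eq {E : Type*} [NormedAddCommGroup E] [NormedSpace ℂ E]
    [CompleteSpace E] {h : V → E} (h_smooth : ContDiff ℝ ∞ h) (h_compact : HasCompactSupport h) :
    ∃ f : 𝓢(V, E), 𝓕 (fun v => f v) = h :=
  let hS : 𝓢(V, E) := h_compact.toSchwartzMap h_smooth
  ⟨𝓕⁻ hS, (SchwartzMap.fourier_coe _).symm.trans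
    (congrArg DFunLike.coe (FourierTransform.fourier_fourierInv_eq hS))⟩

theorem exists_companion_discrete_reproducing_general {r : ℝ} (hr : 1 < r) (Φ : 𝓢(V, ℂ))
    (hΦ : ∀ ξ : V, ξ ≠ 0 → ∃ j : ℤ, 𝓕 (fun s => Φ s) (r ^ j • ξ) ≠ 0) :
    ∃ Ψ : 𝓢(V, ℂ), (∫ s, Ψ s = 0) ∧
      ∀ ξ : V, ξ ≠ 0 →
        Summable (fun j : ℤ =>
          ‖𝓕 (fun s => Φ s) (r ^ j • ξ) * (starRingEnd ℂ) (𝓕 (fun s => Ψ s) (r ^ j • ξ))‖) ∧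
        ∑' j : ℤ, 𝓕 (fun s => Φ s) (r ^ j • ξ) *
            (starRingEnd ℂ) (𝓕 (fun s => Ψ s) (r ^ j • ξ)) = 1 := by
  obtain ⟨h, h_smooth, h_compact, h_zero, h_sum⟩ :=
    exists_dilation_companion hr ((𝓕 Φ).smooth ⊤) hΦ
  obtain ⟨Ψ, hΨ⟩ := exists_schwartzMap_fourier_eq (h := fun ξ => (starRingEnd ℂ) (h ξ))
    (conjCLE.contDiff.comp h_smooth) (h_compact.comp_left (map_zero _))
  refine ⟨Ψ, ?_, fun ξ hξ => ?_⟩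
  · simp only [← fourier_apply_zero, hΨ, image_eq_zero_of_notMem_tsupport h_zero, map_zero]
  · simp only [hΨ, conj_conj]
    exact ⟨(h_sum ξ hξ).summable.norm, (h_sum ξ hξ).tsum_eq⟩

end Fourier

/-- Existence of a companion function `Ψ` satisfying the discrete reproducing
condition (1.6) under hypothesis (1.5). -/
theorem exists_companion_discrete_reproducing
    (d : ℕ) (hd : 1 ≤ d) (Φ : SchwartzMap (Ed d) ℂ)
    (hΦ0 : ∫ s, Φ s = 0)
    (hΦnd : ∀ ξ : Ed d, ξ ≠ 0 → ∃ a b : ℝ, 0 < a ∧ 2 * a ≤ b ∧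
      ∀ ε ∈ Set.Ioc a b, 𝓕 (fun s => Φ s) (ε • ξ) ≠ 0) :
    ∃ Ψ : SchwartzMap (Ed d) ℂ, (∫ s, Ψ s = 0) ∧
      ∀ ξ : Ed d, ξ ≠ 0 →
        Summable (fun j : ℤ =>
          ‖𝓕 (fun s => Φ s) (((2 : ℝ) ^ j) • ξ) *
            (starRingEnd ℂ) (𝓕 (fun s => Ψ s) (((2 : ℝ) ^ j) • ξ))‖) ∧
        ∑' j : ℤ, 𝓕 (fun s => Φ s) (((2 : ℝ) ^ j) • ξ) *
            (starRingEnd ℂ) (𝓕 (fun s => Ψ s) (((2 : ℝ) ^ j) • ξ)) = 1 :=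
  exists_companion_discrete_reproducing_general one_lt_two Φ fun ξ hξ =>
    let ⟨_, _, ha, hab, h_ne⟩ := hΦnd ξ hξ
    (exists_zpow_mem_Ioc one_lt_two ha hab).imp fun _ => h_ne _
end
end
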